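/- Let T_3 be the tree on vertices {w, x, y, z, u₁, a₁, b₁, u₂, a₂, b₂} with edges wx, xy, yz, zu₁, u₁a₁, u₁b₁, zu₂, u₂a₂, u₂b₂. Let Δ_S ≥ 3 be an integer, let v be any vertex of T_3, and let G be the tree on n = 10 + Δ_S vertices obtained from T_3 by adding new vertices s, l_1, …, l_{Δ_S−1} together with the edge vs and the edges s l_i (1 ≤ i ≤ Δ_S−1). Then γ^ID(G) ≤ ((Δ−1)/Δ)·n, where Δ is the maximum degree of G. -/

import Mathlib

open SimpleGraph

/-- The closed neighborhood `N[v]` of a vertex `v` in `G`. -/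
def closedNbhd {V : Type*} (G : SimpleGraph V) (v : V) : Set V :=
  insert v (G.neighborSet v)

/-- `C` is an identifying code of `G`: it dominates every vertex and the
closed neighborhoods of distinct vertices intersect `C` differently. -/
def IsIDCode {V : Type*} (G : SimpleGraph V) (C : Set V) : Prop :=
  (∀ v, (closedNbhd G v ∩ C).Nonempty) ∧
  ∀ u w : V, u ≠ w → closedNbhd G u ∩ C ≠ closedNbhd G w ∩ C

/-- The identification number `γ^ID(G)`: the minimum size of an identifying code. -/
noncomputable def idNum {V : Type*} [Fintype V] (G : SimpleGraph V) : ℕ :=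
  sInf {k | ∃ C : Set V, C.ncard = k ∧ IsIDCode G C}

/-- `G` is identifiable (closed-twin-free). -/
def Identifiable {V : Type*} (G : SimpleGraph V) : Prop :=
  ∀ u w : V, u ≠ w → closedNbhd G u ≠ closedNbhd G w

/-- The maximum degree of a finite graph `G`. -/
noncomputable def maxDeg {V : Type*} [Fintype V] (G : SimpleGraph V) : ℕ :=
  Finset.univ.sup fun v => (G.neighborSet v).ncard

/-- `S` is a dominating set of `G`. -/
def IsDomSet {V : Type*} (G : SimpleGraph V) (S : Set V) : Prop :=
  ∀ v, (closedNbhd G v ∩ S).Nonempty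

/-- The domination number `γ(G)`. -/
noncomputable def domNum {V : Type*} [Fintype V] (G : SimpleGraph V) : ℕ :=
  sInf {k | ∃ S : Set V, S.ncard = k ∧ IsDomSet G S}

/-- The star `K_{1,k}`: vertex `0` is adjacent to each of the `k` other vertices. -/
def starGraph (k : ℕ) : SimpleGraph (Fin (k + 1)) :=
  SimpleGraph.fromRel fun a _ => a = 0

/-- The graph obtained from `G'` by appending a star with `k` extra leaves onto the
vertex `v`: we add a new universal vertex `u = Sum.inr none` adjacent to `v`,
and `k` new leaves `Sum.inr (some i)` adjacent to `u` (so the star has `k + 1`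
leaves in total, one of which is identified with `v`, i.e. a `(k+1)`-star is
appended by one of its leaves onto `v`). -/
def appendStar {V : Type*} (G' : SimpleGraph V) (v : V) (k : ℕ) :
    SimpleGraph (V ⊕ Option (Fin k)) :=
  SimpleGraph.fromRel fun a b =>
    (∃ x y, a = Sum.inl x ∧ b = Sum.inl y ∧ G'.Adj x y) ∨
    (a = Sum.inl v ∧ b = Sum.inr none) ∨
    (∃ i, a = Sum.inr none ∧ b = Sum.inr (some i))

/-- The tree `T₃`: a path `w x y z` (vertices `0 1 2 3`) with two 3-stars appended by
a leaf each onto `z = 3`; `u₁ = 4`, `a₁ = 5`, `b₁ = 6`, `u₂ = 7`, `a₂ = 8`, `b₂ = 9`. -/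
def T3graph : SimpleGraph (Fin 10) :=
  SimpleGraph.fromEdgeSet
    {s(0, 1), s(1, 2), s(2, 3), s(3, 4), s(4, 5), s(4, 6), s(3, 7), s(7, 8), s(7, 9)}

instance : DecidableRel T3graph.Adj := fun a b =>
  decidable_of_iff (s(a, b) ∈ ({s(0, 1), s(1, 2), s(2, 3), s(3, 4), s(4, 5), s(4, 6), s(3, 7),
    s(7, 8), s(7, 9)} : Finset (Sym2 (Fin 10))) ∧ a ≠ b)
    (by simp [T3graph, SimpleGraph.fromEdgeSet_adj])

section aux
variable {V : Type*} (G : SimpleGraph V) (v : V) (k : ℕ)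

lemma as_ll (x y : V) : (appendStar G v k).Adj (Sum.inl x) (Sum.inl y) ↔ G.Adj x y := by
  simp only [appendStar, SimpleGraph.fromRel_adj]
  constructor
  · rintro ⟨_, h⟩
    simpa [G.adj_comm y x] using h
  · intro h
    exact ⟨by simpa using h.ne, by simp [h]⟩

lemma as_ls (x : V) : (appendStar G v k).Adj (Sum.inl x) (Sum.inr none) ↔ x = v := by
  simp [appendStar, SimpleGraph.fromRel_adj]

lemma as_ln (x : V) (i : Fin k) : ¬ (appendStar G v k).Adj (Sum.inl x) (Sum.inr (some i)) := by
  simp [appendStar, SimpleGraph.fromRel_adj]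

lemma as_sn (i : Fin k) : (appendStar G v k).Adj (Sum.inr none) (Sum.inr (some i)) := by
  simp [appendStar, SimpleGraph.fromRel_adj]

lemma as_nn (i j : Fin k) :
    ¬ (appendStar G v k).Adj (Sum.inr (some j)) (Sum.inr (some i)) := by
  simp [appendStar, SimpleGraph.fromRel_adj]

lemma as_sl (x : V) : (appendStar G v k).Adj (Sum.inr none) (Sum.inl x) ↔ x = v := by
  rw [SimpleGraph.adj_comm, as_ls]

lemma as_nl (x : V) (i : Fin k) : ¬ (appendStar G v k).Adj (Sum.inr (some i)) (Sum.inl x) := by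
  rw [SimpleGraph.adj_comm]; exact as_ln G v k x i

lemma as_ns (i : Fin k) : (appendStar G v k).Adj (Sum.inr (some i)) (Sum.inr none) :=
  (as_sn G v k i).symm

/-- The code `D ∪ {s} ∪ {l_i : i ≠ 0}`. -/
lemma code_ok (m : ℕ) (hm : 1 ≤ m) (D : Finset V) (hv : v ∈ D)
    (hdom : ∀ x, ∃ d ∈ D, d = x ∨ G.Adj x d)
    (hsep : ∀ x y, x ≠ v → y ≠ v → x ≠ y →
      ∃ d ∈ D, ¬ ((d = x ∨ G.Adj x d) ↔ (d = y ∨ G.Adj y d))) :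
    IsIDCode (appendStar G v (m + 1))
      (↑(D.disjSum ((Finset.univ : Finset (Option (Fin (m + 1)))).erase (some 0))) : Set _) := by
  have key : ∀ u w, closedNbhd (appendStar G v (m + 1)) u ∩
      (↑(D.disjSum ((Finset.univ : Finset (Option (Fin (m + 1)))).erase (some 0))) : Set _) =
      closedNbhd (appendStar G v (m + 1)) w ∩
      (↑(D.disjSum ((Finset.univ : Finset (Option (Fin (m + 1)))).erase (some 0))) : Set _) →
      (∀ d ∈ D, (Sum.inl d = u ∨ (appendStar G v (m + 1)).Adj u (Sum.inl d)) ↔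
        (Sum.inl d = w ∨ (appendStar G v (m + 1)).Adj w (Sum.inl d))) ∧
      ((Sum.inr none = u ∨ (appendStar G v (m + 1)).Adj u (Sum.inr none)) ↔
        (Sum.inr none = w ∨ (appendStar G v (m + 1)).Adj w (Sum.inr none))) ∧
      (∀ i, i ≠ 0 → ((Sum.inr (some i) = u ∨ (appendStar G v (m + 1)).Adj u (Sum.inr (some i))) ↔
        (Sum.inr (some i) = w ∨ (appendStar G v (m + 1)).Adj w (Sum.inr (some i))))) := by
    intro u w h
    rw [Set.ext_iff] at h
    refine ⟨fun d hd => ?_, ?_, fun i hi => ?_⟩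
    · simpa [closedNbhd, hd] using h (Sum.inl d)
    · simpa [closedNbhd] using h (Sum.inr none)
    · simpa [closedNbhd, hi] using h (Sum.inr (some i))
  refine ⟨?_, ?_⟩
  · rintro (x | _ | i)
    · obtain ⟨d, hd, h⟩ := hdom x
      exact ⟨Sum.inl d, by simpa [closedNbhd, as_ll] using h, by simpa using hd⟩
    · exact ⟨Sum.inr none, by simp [closedNbhd], by simp⟩
    · exact ⟨Sum.inr none, by simp [closedNbhd, as_ns], by simp⟩
  · intro u w hne heq
    obtain ⟨h1, h2, h3⟩ := key u w heq
    clear key heq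
    have hl : ¬ Fin.last m = 0 := by
      intro h
      have := congrArg Fin.val h
      simp at this
      omega
    rcases u with (x | _ | i) <;> rcases w with (y | _ | j) <;>
      simp only [as_ll, as_ls, as_ln, as_sn, as_nn, as_sl, as_nl, as_ns, Sum.inl.injEq,
        Sum.inr.injEq, reduceCtorEq, false_or, or_false, or_true, true_or, iff_true, true_iff,
        Option.some.injEq, ne_eq, not_true_eq_false, iff_false, false_iff, iff_self] at h1 h2 h3 hne
    · by_cases hx : x = v
      · exact hne (hx.trans (h2.1 hx).symm)
      · obtain ⟨d, hd, h⟩ := hsep x y hx (fun hy => hx (h2.2 hy)) hne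
        exact h (h1 d hd)
    · exact h3 (Fin.last m) hl
    · obtain ⟨d, hd, h⟩ := hdom x
      exact h1 d hd h
    · exact h3 (Fin.last m) hl
    · exact h1 v hv rfl
    · obtain ⟨d, hd, h⟩ := hdom y
      exact h1 d hd h
    · exact h1 v hv rfl
    · by_cases hi : i = 0
      · by_cases hj : j = 0
        · exact hne (hi.trans hj.symm)
        · exact hne ((h3 j hj).2 rfl).symm
      · exact hne ((h3 i hi).1 rfl)
end aux

lemma maxDeg_ge (v : Fin 10) (k : ℕ) : k + 1 ≤ maxDeg (appendStar T3graph v k) := by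
  have h := Finset.le_sup (f := fun a => ((appendStar T3graph v k).neighborSet a).ncard)
    (Finset.mem_univ (Sum.inr none))
  refine le_trans ?_ h
  have hs : (↑(({v} : Finset (Fin 10)).disjSum
      ((Finset.univ : Finset (Option (Fin k))).erase none)) : Set _) ⊆
      (appendStar T3graph v k).neighborSet (Sum.inr none) := by
    rintro (x | _ | i) hx
    · simpa [as_sl] using hx
    · simp at hx
    · simp [as_sn]
  have h2 := Set.ncard_le_ncard hs (Set.toFinite _)
  rw [Set.ncard_coe_finset, Finset.card_disjSum, Finset.card_erase_of_mem (Finset.mem_univ _)] at h2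
  simp only [Finset.card_singleton, Finset.card_univ, Fintype.card_option, Fintype.card_fin] at h2
  show _ ≤ ((appendStar T3graph v k).neighborSet (Sum.inr none)).ncard
  omega

lemma maxDeg_ge_four (k : ℕ) : 4 ≤ maxDeg (appendStar T3graph 3 k) := by
  have h := Finset.le_sup (f := fun a => ((appendStar T3graph 3 k).neighborSet a).ncard)
    (Finset.mem_univ (Sum.inl 3))
  refine le_trans ?_ h
  have hs : (↑(({2, 4, 7} : Finset (Fin 10)).disjSum
      ({none} : Finset (Option (Fin k)))) : Set _) ⊆
      (appendStar T3graph 3 k).neighborSet (Sum.inl 3) := by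
    rintro (x | _ | i) hx
    · have hx' : x = 2 ∨ x = 4 ∨ x = 7 := by simpa using hx
      rw [SimpleGraph.mem_neighborSet, as_ll]
      rcases hx' with rfl | rfl | rfl <;> decide
    · simp [as_ls]
    · simp at hx
  have h2 := Set.ncard_le_ncard hs (Set.toFinite _)
  rw [Set.ncard_coe_finset, Finset.card_disjSum] at h2
  exact h2

/-- Existence of the code on the `T₃` side. -/
lemma exists_D (v : Fin 10) : ∃ D : Finset (Fin 10), v ∈ D ∧
    (∀ x, ∃ d ∈ D, d = x ∨ T3graph.Adj x d) ∧
    (∀ x y, x ≠ v → y ≠ v → x ≠ y →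
      ∃ d ∈ D, ¬ ((d = x ∨ T3graph.Adj x d) ↔ (d = y ∨ T3graph.Adj y d))) ∧
    D.card = if v = 3 then 7 else 6 := by
  fin_cases v
  · exact ⟨{0, 3, 4, 5, 7, 8}, by decide, by decide, by decide, by decide⟩
  · exact ⟨{1, 2, 5, 6, 8, 9}, by decide, by decide, by decide, by decide⟩
  · exact ⟨{0, 2, 5, 6, 8, 9}, by decide, by decide, by decide, by decide⟩
  · exact ⟨{0, 2, 3, 4, 5, 7, 8}, by decide, by decide, by decide, by decide⟩
  · exact ⟨{0, 2, 4, 5, 8, 9}, by decide, by decide, by decide, by decide⟩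
  · exact ⟨{0, 2, 4, 5, 8, 9}, by decide, by decide, by decide, by decide⟩
  · exact ⟨{0, 2, 4, 6, 8, 9}, by decide, by decide, by decide, by decide⟩
  · exact ⟨{0, 2, 5, 6, 7, 8}, by decide, by decide, by decide, by decide⟩
  · exact ⟨{0, 2, 5, 6, 7, 8}, by decide, by decide, by decide, by decide⟩
  · exact ⟨{0, 2, 5, 6, 7, 9}, by decide, by decide, by decide, by decide⟩

/-- let `G` be the tree on `n = 10 + Δ_S` vertices obtained from `T₃` by
appending a `Δ_S`-star (`Δ_S ≥ 3`) by one of its leaves onto any vertex `v` of `T₃`.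
Then `γ^ID(G) ≤ ((Δ−1)/Δ)·n`, where `Δ` is the maximum degree of `G`. -/
theorem stmt_12 (ΔS : ℕ) (hΔS : 3 ≤ ΔS) (v : Fin 10) :
    (idNum (appendStar T3graph v (ΔS - 1)) : ℝ) ≤
      ((maxDeg (appendStar T3graph v (ΔS - 1)) : ℝ) - 1) /
        (maxDeg (appendStar T3graph v (ΔS - 1)) : ℝ) * ((10 : ℝ) + (ΔS : ℝ)) := by
  obtain ⟨m, rfl⟩ : ∃ m, ΔS = m + 2 := ⟨ΔS - 2, by omega⟩
  have hk : m + 2 - 1 = m + 1 := by omega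
  rw [hk]
  obtain ⟨D, hv, hdom, hsep, hcard⟩ := exists_D v
  have hcode := code_ok T3graph v m (by omega) D hv hdom hsep
  have hle : idNum (appendStar T3graph v (m + 1)) ≤ D.card + (m + 1) := by
    apply Nat.sInf_le
    refine ⟨_, ?_, hcode⟩
    rw [Set.ncard_coe_finset, Finset.card_disjSum,
      Finset.card_erase_of_mem (Finset.mem_univ _)]
    simp
  have hd := maxDeg_ge v (m + 1)
  have hd4 : v = 3 → 4 ≤ maxDeg (appendStar T3graph v (m + 1)) := by
    rintro rfl
    exact maxDeg_ge_four _
  generalize maxDeg (appendStar T3graph v (m + 1)) = d at *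
  generalize idNum (appendStar T3graph v (m + 1)) = g at *
  have hm : 1 ≤ m := by omega
  have hdpos : (0 : ℝ) < d := by
    have : 0 < d := by omega
    exact_mod_cast this
  have h1 : (1 : ℝ) ≤ m := by exact_mod_cast hm
  have h2 : (m : ℝ) + 2 ≤ d := by exact_mod_cast hd
  rw [div_mul_eq_mul_div, le_div_iff₀ hdpos]
  push_cast
  by_cases h3 : v = 3
  · rw [if_pos h3] at hcard
    have h4 : (4 : ℝ) ≤ d := by exact_mod_cast hd4 h3
    have hg : (g : ℝ) ≤ m + 8 := by
      have : g ≤ m + 8 := by omega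
      exact_mod_cast this
    nlinarith
  · rw [if_neg h3] at hcard
    have hg : (g : ℝ) ≤ m + 7 := by
      have : g ≤ m + 7 := by omega
      exact_mod_cast this
    nlinarith
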